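/- arXiv:2604.03152 — 2 statements merged into one kernel-verified Lean document; each statement's English description precedes it below -/
import Mathlib

section
/- Let 1 < β < 2, let U be a finite universe of n ≥ 1 elements and F a finite family of subsets of U. Suppose each element e ∈ U is assigned to a set asn(e) ∈ F containing it, with cov(s) = {e ∈ U : asn(e) = s}, and each set s with cov(s) ≠ ∅ carries a level lev(s) ∈ [0, ⌈log_β n⌉], with lev(e) = lev(asn(e)), such that: (1) |cov(s)| ≥ β^{lev(s)} for every s with cov(s) ≠ ∅, and (2) |{e ∈ s : lev(e) < j}| < β^j for every s ∈ F and every natural number j ≤ log_β n. Let C = {s ∈ F : cov(s) ≠ ∅} and let D ⊂ U be any set of deleted elements with |D| ≤ (β - 1)·|C|. Then every subfamily of F whose union contains U \ D has size at least (2 - β)·|C| / (β·(ln n + 1)); in particular the optimum set cover size k' for the universe U \ D satisfies k' ≥ (2 - β)·|C| / (β·(ln n + 1)). -/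
/-- If at most `β ^ (f a + 1)` points of `s` have `f`-value at most `f a`, for every `a ∈ s`, then
the sum of `β ^ (-f)` over `s` is at most `β` times a harmonic number. -/
theorem sum_inv_pow_le_mul_harmonic {α : Type*} [DecidableEq α] {β : ℝ} (hβ : 0 < β)
    (f : α → ℕ) (s : Finset α)
    (h : ∀ a ∈ s, ((s.filter (fun e => f e ≤ f a)).card : ℝ) ≤ β ^ (f a + 1)) :
    ∑ e ∈ s, (β ^ f e)⁻¹ ≤ β * (harmonic s.card : ℝ) := by
  induction s using Finset.induction_on_max_value f with
  | empty => simp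
  | insert a s ha hmax ih =>
    have hs := ih fun b hb => (Nat.cast_le.mpr (Finset.card_le_card
      (Finset.filter_subset_filter _ (Finset.subset_insert a s)))).trans
      (h b (Finset.mem_insert_of_mem hb))
    have hcard : ((s.card : ℝ) + 1) ≤ β ^ (f a + 1) := by
      have := h a (Finset.mem_insert_self a s)
      rw [Finset.filter_true_of_mem (by simpa using hmax),
        Finset.card_insert_of_notMem ha] at this
      exact_mod_cast this
    have hterm : (β ^ f a)⁻¹ ≤ β * ((s.card : ℝ) + 1)⁻¹ := by
      rw [← div_eq_mul_inv, inv_eq_one_div, div_le_div_iff₀ (by positivity) (by positivity)]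
      linarith [pow_succ' β (f a)]
    rw [Finset.sum_insert ha, Finset.card_insert_of_notMem ha, harmonic_succ]
    push_cast
    linarith

/-- The reciprocal fibre sizes of a map sum to the number of nonempty fibres. -/
theorem sum_inv_card_fiber {α γ : Type*} [DecidableEq γ] (U : Finset α) (g : α → γ) :
    ∑ e ∈ U, ((U.filter (fun x => g x = g e)).card : ℝ)⁻¹ = (U.image g).card := by
  rw [← Finset.sum_fiberwise_of_maps_to (t := U.image g)
    (fun e he => Finset.mem_image_of_mem g he)]
  rw [Finset.card_eq_sum_ones, Nat.cast_sum]
  refine Finset.sum_congr rfl fun c hc => ?_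
  obtain ⟨a, ha, rfl⟩ := Finset.mem_image.mp hc
  have hne : ((U.filter (fun x => g x = g a)).card : ℝ) ≠ 0 :=
    Nat.cast_ne_zero.mpr (Finset.card_ne_zero_of_mem (Finset.mem_filter.mpr ⟨ha, rfl⟩))
  rw [Finset.sum_congr rfl (g := fun _ => ((U.filter (fun x => g x = g a)).card : ℝ)⁻¹)
    fun e he => by rw [(Finset.mem_filter.mp he).2]]
  simp [hne]

/-- A nonnegative weight on a finite set is at most the total weight of any cover. -/
theorem sum_le_sum_sum_of_cover {α : Type*} [DecidableEq α] {w : α → ℝ} (hw : ∀ e, 0 ≤ w e)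
    (X : Finset α) (A : Finset (Finset α)) (h : ∀ e ∈ X, ∃ s ∈ A, e ∈ s) :
    ∑ e ∈ X, w e ≤ ∑ s ∈ A, ∑ e ∈ s, w e := by
  induction A using Finset.induction_on generalizing X with
  | empty =>
    have : X = ∅ := Finset.eq_empty_of_forall_notMem fun e he => by simpa using h e he
    simp [this]
  | insert s A hs ih =>
    have hrest := ih (X \ s) fun e he => by
      obtain ⟨he, hes⟩ := Finset.mem_sdiff.mp he
      obtain ⟨t, ht, het⟩ := h e he
      rcases Finset.mem_insert.mp ht with rfl | ht
      · exact absurd het hes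
      · exact ⟨t, ht, het⟩
    have hinter : ∑ e ∈ X ∩ s, w e ≤ ∑ e ∈ s, w e :=
      Finset.sum_le_sum_of_subset_of_nonneg Finset.inter_subset_right fun e _ _ => hw e
    rw [Finset.sum_insert hs, ← Finset.sum_inter_add_sum_sdiff X s]
    linarith


/-- robustness, Claim 4 of the paper. Let `1 < β < 2`, `U` a finite
universe of `n ≥ 1` elements and `F` a finite family of subsets of `U`, with an assignment
`asn`, covers `cov s = {e ∈ U : asn e = s}`, and levels `lev s ∈ [0, ⌈log_β n⌉]` for sets
with nonempty `cov` (elements inheriting `lev e = lev (asn e)`), satisfying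
(1) `|cov s| ≥ β ^ lev s` for every `s` with `cov s ≠ ∅`, and
(2) `|{e ∈ s : lev e < j}| < β ^ j` for every `s ∈ F` and natural `j ≤ log_β n`.
Let `C = {s ∈ F : cov s ≠ ∅}` and let `D ⊂ U` with `|D| ≤ (β - 1)·|C|`. Then every
subfamily of `F` covering `U \ D` has size at least `(2 - β)·|C| / (β·(ln n + 1))`;
in particular the optimum cover size for `U \ D` obeys this lower bound. -/
theorem stmt_5 {α : Type*} [DecidableEq α] (β : ℝ) (hβ : 1 < β) (hβ2 : β < 2)
    (U : Finset α) (F : Finset (Finset α)) (hn : 1 ≤ U.card)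
    (hF : ∀ s ∈ F, s ⊆ U)
    (asn : α → Finset α)
    (hasn_mem : ∀ e ∈ U, asn e ∈ F) (hasn_in : ∀ e ∈ U, e ∈ asn e)
    (lev : Finset α → ℕ)
    (hlev_ub : ∀ s ∈ F, (U.filter (fun e => asn e = s)).Nonempty →
      lev s ≤ ⌈Real.logb β (U.card : ℝ)⌉₊)
    (h1 : ∀ s ∈ F, (U.filter (fun e => asn e = s)).Nonempty →
      β ^ (lev s) ≤ ((U.filter (fun e => asn e = s)).card : ℝ))
    (h2 : ∀ s ∈ F, ∀ j : ℕ, (j : ℝ) ≤ Real.logb β (U.card : ℝ) →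
      ((s.filter (fun e => lev (asn e) < j)).card : ℝ) < β ^ j)
    (C : Finset (Finset α))
    (hC : C = F.filter (fun s => (U.filter (fun e => asn e = s)).Nonempty))
    (D : Finset α) (hD : D ⊂ U) (hDcard : (D.card : ℝ) ≤ (β - 1) * C.card) :
    ∀ C'' : Finset (Finset α), C'' ⊆ F → (∀ e ∈ U \ D, ∃ s ∈ C'', e ∈ s) →
      (2 - β) * C.card / (β * (Real.log (U.card : ℝ) + 1)) ≤ (C''.card : ℝ) := by
  intro A hAF hcover
  set w : α → ℝ := fun e => ((U.filter (fun x => asn x = asn e)).card : ℝ)⁻¹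
  have hw0 : ∀ e, 0 ≤ w e := fun e => by positivity
  have hw1 : ∀ e, w e ≤ 1 := fun e => Nat.cast_inv_le_one _
  have hn0 : (0 : ℝ) < U.card := by exact_mod_cast hn
  have hlog : 0 ≤ Real.log (U.card : ℝ) := Real.log_natCast_nonneg _
  have htotal : ∑ e ∈ U, w e = C.card := by
    have himage : U.image asn = C := by
      subst hC
      ext s
      simp only [Finset.mem_image, Finset.mem_filter, Finset.Nonempty]
      exact ⟨fun ⟨e, he, hes⟩ => ⟨hes ▸ hasn_mem e he, e, he, hes⟩, fun ⟨_, h⟩ => h⟩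
    rw [← himage]
    exact sum_inv_card_fiber U asn
  have hdeleted : ∑ e ∈ D, w e ≤ D.card := by
    simpa using Finset.sum_le_sum fun e (_ : e ∈ D) => hw1 e
  have hset : ∀ s ∈ A, ∑ e ∈ s, w e ≤ β * (Real.log (U.card : ℝ) + 1) := by
    intro s hsA
    have hsF := hAF hsA
    have hsU := hF s hsF
    have hle : ∑ e ∈ s, w e ≤ ∑ e ∈ s, (β ^ lev (asn e))⁻¹ :=
      Finset.sum_le_sum fun e he => inv_anti₀ (by positivity)
        (h1 _ (hasn_mem e (hsU he)) ⟨e, Finset.mem_filter.mpr ⟨hsU he, rfl⟩⟩)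
    have hharm : ∑ e ∈ s, (β ^ lev (asn e))⁻¹ ≤ β * (harmonic s.card : ℝ) := by
      refine sum_inv_pow_le_mul_harmonic (by linarith) (fun e => lev (asn e)) s fun a _ => ?_
      rcases le_or_gt ((lev (asn a) + 1 : ℕ) : ℝ) (Real.logb β (U.card : ℝ)) with hj | hj
      · simpa only [Nat.lt_succ_iff] using (h2 s hsF _ hj).le
      · rw [Real.logb_lt_iff_lt_rpow hβ hn0, Real.rpow_natCast] at hj
        refine le_trans ?_ hj.le
        exact_mod_cast Finset.card_le_card ((Finset.filter_subset _ s).trans hsU)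
    have hmono : (harmonic s.card : ℝ) ≤ 1 + Real.log (U.card : ℝ) := by
      rcases s.card.eq_zero_or_pos with h0 | hpos
      · rw [h0, harmonic_zero, Rat.cast_zero]
        linarith
      · refine (harmonic_le_one_add_log _).trans ?_
        gcongr
    nlinarith
  have hbound : ∑ e ∈ U \ D, w e ≤ A.card * (β * (Real.log (U.card : ℝ) + 1)) := by
    refine (sum_le_sum_sum_of_cover hw0 _ A hcover).trans ?_
    simpa using Finset.sum_le_sum hset
  have hsplit := Finset.sum_sdiff (f := w) hD.subset
  rw [div_le_iff₀ (by positivity)]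
  linarith
end

section
/- Let β > 1, let U be a finite universe of n ≥ 1 elements and F a finite family of subsets of U. Suppose each element e ∈ U is assigned to a set asn(e) ∈ F containing it, with cov(s) = {e ∈ U : asn(e) = s}, and each set s with cov(s) ≠ ∅ carries a natural-number level lev(s) ≤ ⌈log_β n⌉, with lev(e) = lev(asn(e)) for each e ∈ U. Assume the relaxed invariant: (1') for every s ∈ F with cov(s) ≠ ∅, |cov(s)| ≥ β^{lev(s) - 1}, and (2') for every s ∈ F and every natural number j ≤ log_β n, |{e ∈ s : lev(e) < j}| < β^{j + 1}. Then C = {s ∈ F : cov(s) ≠ ∅} is a set cover of U, and for every subfamily {s_1, …, s_k} ⊆ F that covers U, |C| ≤ β³·(ln n + 1)·k. -/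
/-- If every element of `s` has weight at most `B` divided by its rank in the order of `lev`
(ties counted in full), then the total weight of `s` is at most `B` times a harmonic number. -/
theorem sum_le_mul_harmonic_of_rank {α : Type*} [DecidableEq α] (lev : α → ℕ) (w : α → ℝ)
    (B : ℝ) (hw : ∀ e, 0 ≤ w e) (s : Finset α)
    (h : ∀ e ∈ s, ((s.filter (fun x => lev x ≤ lev e)).card : ℝ) * w e ≤ B) :
    ∑ e ∈ s, w e ≤ B * (harmonic s.card : ℝ) := by
  induction s using Finset.induction_on_max_value lev with
  | empty => simp
  | insert a s ha hmax ih =>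
    have hs : ∑ e ∈ s, w e ≤ B * (harmonic s.card : ℝ) := by
      refine ih fun e he => le_trans ?_ (h e (Finset.mem_insert_of_mem he))
      have := hw e
      gcongr
      exact Finset.subset_insert a s
    have hlast := h a (Finset.mem_insert_self a s)
    rw [Finset.filter_true_of_mem (by simpa using hmax), Finset.card_insert_of_notMem ha,
      mul_comm, ← le_div_iff₀ (by positivity)] at hlast
    rw [Finset.sum_insert ha, Finset.card_insert_of_notMem ha, harmonic_succ]
    push_cast at hlast ⊢
    rw [mul_add, ← div_eq_mul_inv]
    linarith

/-- If fewer than `β ^ (j + 1)` elements of `s` lie below each level `j ≤ log_β n`, where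
`|s| ≤ n`, then the weights `β ^ (1 - lev e)` of `s` sum to at most `β³ (ln n + 1)`. -/
theorem sum_zpow_one_sub_lev_le {α : Type*} [DecidableEq α] {β : ℝ} (hβ : 1 < β) {n : ℕ}
    (hn : 1 ≤ n) (lev : α → ℕ) (s : Finset α) (hs : s.card ≤ n)
    (h : ∀ j : ℕ, (j : ℝ) ≤ Real.logb β n →
      ((s.filter (fun e => lev e < j)).card : ℝ) < β ^ (j + 1)) :
    ∑ e ∈ s, β ^ (1 - (lev e : ℤ)) ≤ β ^ 3 * (Real.log n + 1) := by
  have hβ0 : 0 < β := by linarith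
  have hn0 : (0 : ℝ) < n := by exact_mod_cast hn
  have hcount (j : ℕ) : ((s.filter (fun e => lev e < j)).card : ℝ) ≤ β ^ (j + 1) := by
    rcases le_or_gt (j : ℝ) (Real.logb β n) with hj | hj
    · exact (h j hj).le
    · have hnj : (n : ℝ) < β ^ j := by
        rwa [Real.logb_lt_iff_lt_rpow hβ hn0, Real.rpow_natCast] at hj
      calc ((s.filter (fun e => lev e < j)).card : ℝ)
          ≤ n := by exact_mod_cast (Finset.card_filter_le _ _).trans hs
        _ ≤ β ^ j := hnj.le
        _ ≤ β ^ (j + 1) := pow_le_pow_right₀ hβ.le (Nat.le_succ j)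
  have hsum := sum_le_mul_harmonic_of_rank lev (fun e => β ^ (1 - (lev e : ℤ))) (β ^ 3)
    (fun e => by positivity) s fun e _ => by
      have hc := hcount (lev e + 1)
      simp only [Nat.lt_succ_iff] at hc
      calc _ ≤ β ^ (lev e + 1 + 1) * β ^ (1 - (lev e : ℤ)) := by gcongr
        _ = β ^ 3 := by
          rw [← zpow_natCast, ← zpow_natCast, ← zpow_add₀ hβ0.ne']
          congr 1
          push_cast
          ring
  refine hsum.trans ?_
  gcongr
  rcases Nat.eq_zero_or_pos s.card with h0 | hpos
  · have := Real.log_nonneg (show (1 : ℝ) ≤ n by exact_mod_cast hn)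
    simp only [h0, harmonic_zero, Rat.cast_zero]
    linarith
  · have hlog : Real.log s.card ≤ Real.log n :=
      Real.log_le_log (by exact_mod_cast hpos) (by exact_mod_cast hs)
    have := harmonic_le_one_add_log s.card
    linarith

/-- approximation of the "local" algorithm's relaxed invariant. Let
`β > 1`, `U` a finite universe of `n ≥ 1` elements and `F` a finite family of subsets of
`U`, with an assignment `asn`, covers `cov s = {e ∈ U : asn e = s}`, and levels
`lev s ≤ ⌈log_β n⌉` for sets with nonempty `cov` (elements inheriting
`lev e = lev (asn e)`), satisfying the relaxed invariant:
(1') `|cov s| ≥ β ^ (lev s - 1)` for every `s` with `cov s ≠ ∅`, and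
(2') `|{e ∈ s : lev e < j}| < β ^ (j + 1)` for every `s ∈ F` and natural `j ≤ log_β n`.
Then `C = {s ∈ F : cov s ≠ ∅}` is a set cover of `U`, and for every subfamily of `F`
covering `U` of size `k`, `|C| ≤ β³·(ln n + 1)·k`. -/
theorem stmt_7 {α : Type*} [DecidableEq α] (β : ℝ) (hβ : 1 < β)
    (U : Finset α) (F : Finset (Finset α)) (hn : 1 ≤ U.card)
    (hF : ∀ s ∈ F, s ⊆ U)
    (asn : α → Finset α)
    (hasn_mem : ∀ e ∈ U, asn e ∈ F) (hasn_in : ∀ e ∈ U, e ∈ asn e)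
    (lev : Finset α → ℕ)
    (hlev_ub : ∀ s ∈ F, (U.filter (fun e => asn e = s)).Nonempty →
      lev s ≤ ⌈Real.logb β (U.card : ℝ)⌉₊)
    (h1 : ∀ s ∈ F, (U.filter (fun e => asn e = s)).Nonempty →
      β ^ ((lev s : ℤ) - 1) ≤ ((U.filter (fun e => asn e = s)).card : ℝ))
    (h2 : ∀ s ∈ F, ∀ j : ℕ, (j : ℝ) ≤ Real.logb β (U.card : ℝ) →
      ((s.filter (fun e => lev (asn e) < j)).card : ℝ) < β ^ (j + 1))
    (C : Finset (Finset α))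
    (hC : C = F.filter (fun s => (U.filter (fun e => asn e = s)).Nonempty)) :
    (C ⊆ F ∧ ∀ e ∈ U, ∃ s ∈ C, e ∈ s) ∧
    (∀ C' : Finset (Finset α), C' ⊆ F → (∀ e ∈ U, ∃ s ∈ C', e ∈ s) →
      (C.card : ℝ) ≤ β ^ 3 * (Real.log (U.card : ℝ) + 1) * C'.card) := by
  subst hC
  have hβ0 : 0 < β := by linarith
  have hmem : ∀ e ∈ U, asn e ∈ F.filter (fun s => (U.filter (fun e => asn e = s)).Nonempty) :=
    fun e he => Finset.mem_filter.2 ⟨hasn_mem e he, e, by simp [he]⟩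
  refine ⟨⟨Finset.filter_subset _ _, fun e he => ⟨asn e, hmem e he, hasn_in e he⟩⟩, ?_⟩
  intro C' hC' hcov
  set C := F.filter (fun s => (U.filter (fun e => asn e = s)).Nonempty)
  set w : α → ℝ := fun e => β ^ (1 - (lev (asn e) : ℤ)) with hw
  have hw0 : ∀ e, 0 ≤ w e := fun e => by positivity
  have hfiber : ∀ s ∈ C, (1 : ℝ) ≤ ∑ e ∈ U with asn e = s, w e := by
    intro s hs
    obtain ⟨hsF, hne⟩ := Finset.mem_filter.1 hs
    have hconst : ∀ e ∈ U.filter (fun e => asn e = s), w e = β ^ (1 - (lev s : ℤ)) := by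
      intro e he
      rw [hw, ← (Finset.mem_filter.1 he).2]
    rw [Finset.sum_congr rfl hconst, Finset.sum_const, nsmul_eq_mul]
    calc (1 : ℝ) = β ^ ((lev s : ℤ) - 1) * β ^ (1 - (lev s : ℤ)) := by
          rw [← zpow_add₀ hβ0.ne']
          simp
      _ ≤ _ := by
          gcongr
          exact h1 s hsF hne
  calc (C.card : ℝ) = ∑ s ∈ C, (1 : ℝ) := by simp
    _ ≤ ∑ s ∈ C, ∑ e ∈ U with asn e = s, w e := Finset.sum_le_sum hfiber
    _ = ∑ e ∈ U, w e := Finset.sum_fiberwise_of_maps_to hmem w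
    _ ≤ ∑ e ∈ U, ∑ s ∈ C' with e ∈ s, w e := by
        refine Finset.sum_le_sum fun e he => ?_
        obtain ⟨s, hs, hes⟩ := hcov e he
        exact Finset.single_le_sum (f := fun _ => w e) (fun _ _ => hw0 e)
          (Finset.mem_filter.2 ⟨hs, hes⟩)
    _ = ∑ s ∈ C', ∑ e ∈ s, w e := by
        refine Finset.sum_comm' fun e s => ?_
        rw [Finset.mem_filter]
        exact ⟨fun h => ⟨h.2.2, h.2.1⟩, fun h => ⟨hF s (hC' h.2) h.1, h.2, h.1⟩⟩
    _ ≤ ∑ s ∈ C', β ^ 3 * (Real.log (U.card : ℝ) + 1) :=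
        Finset.sum_le_sum fun s hs => sum_zpow_one_sub_lev_le hβ hn (fun e => lev (asn e)) s
          (Finset.card_le_card (hF s (hC' hs))) (h2 s (hC' hs))
    _ = β ^ 3 * (Real.log (U.card : ℝ) + 1) * C'.card := by
        rw [Finset.sum_const, nsmul_eq_mul, mul_comm]
end
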